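/- Let S be a skew lattice with D-classes A > B. Then the cosets of A in B partition B: every y ∈ B belongs to its own coset A∧y∧A, and for all y, y' ∈ B, if the cosets A∧y∧A and A∧y'∧A have a common element then they are equal as sets. -/

import Mathlib

/-!
The point is that `∧` is a regular band operation: `x ∧ y ∧ x ∧ z ∧ x = x ∧ y ∧ z ∧ x`.
If `y` lies below `a` in the preorder `y ∧ a ∧ y = y`, then `y ∨ a ∨ y` is `D`-equivalent to `a` and
lies above `y` in the natural partial order. So `x ∧ y = x ∧ y ∧ n` and `z ∧ x = m ∧ z ∧ x` for
suitable `n`, `m` in the `D`-class of `x`; as that class is a rectangular band, `n ∧ x ∧ m = n ∧ m`,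
which is regularity.

By regularity `c ∧ (a ∧ y ∧ a) ∧ c = c ∧ y ∧ c` whenever `c ∧ a ∧ c = c`. Hence every element of the
coset `A ∧ y ∧ A` determines the whole coset.
-/

section Band

variable {S : Type*} {op : S → S → S}

local infixl:70 " ⬝ " => op

/-- The preorder of a band whose symmetrization is Green's relation `D`: `x` lies in the two-sided
ideal generated by `y`. -/
def DLE (op : S → S → S) (x y : S) : Prop :=
  op (op x y) x = x

/-- Green's relation `D` of a band. -/
abbrev GreenD (op : S → S → S) : S → S → Prop :=
  AntisymmRel (DLE op)

/-- The `D`-class of `a` in a band. -/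
def dClass (op : S → S → S) (a : S) : Set S :=
  {x | GreenD op x a}

/-- The coset `A ∧ y ∧ A` for `op = ∧`, with the same element of `A` on both sides.
It is meant for a `D`-class `A`. -/
def coset (op : S → S → S) (A : Set S) (y : S) : Set S :=
  {z | ∃ a ∈ A, z = op (op a y) a}

/-- The identity that makes a band a regular band. -/
def IsRegularOp (op : S → S → S) : Prop :=
  ∀ x y z, op (op (op (op x y) x) z) x = op (op (op x y) z) x

protected theorem DLE.refl [Std.IdempotentOp op] (x : S) : DLE op x x := by
  simp only [DLE, Std.IdempotentOp.idempotent]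

section Regular

variable [Std.Associative op] {a c : S}

theorem IsRegularOp.conj_conj (hop : IsRegularOp op) (hca : DLE op c a) (y : S) :
    c ⬝ (a ⬝ y ⬝ a) ⬝ c = c ⬝ y ⬝ c := by
  calc
    c ⬝ (a ⬝ y ⬝ a) ⬝ c = c ⬝ a ⬝ (y ⬝ a) ⬝ c := by ac_rfl
    _ = c ⬝ a ⬝ c ⬝ (y ⬝ a) ⬝ c := (hop c a (y ⬝ a)).symm
    _ = c ⬝ y ⬝ a ⬝ c := by rw [hca]; ac_rfl
    _ = c ⬝ y ⬝ c ⬝ a ⬝ c := (hop c y a).symm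
    _ = c ⬝ y ⬝ (c ⬝ a ⬝ c) := by ac_rfl
    _ = c ⬝ y ⬝ c := by rw [hca]

theorem IsRegularOp.coset_eq_of_inter_nonempty (hop : IsRegularOp op) {A : Set S}
    (hA : ∀ c ∈ A, ∀ a ∈ A, DLE op c a) {y y' : S}
    (hyy' : (coset op A y ∩ coset op A y').Nonempty) : coset op A y = coset op A y' := by
  obtain ⟨z, ⟨a, ha, hz⟩, ⟨a', ha', hz'⟩⟩ := hyy'
  have conj_eq (c : S) (hc : c ∈ A) : c ⬝ y ⬝ c = c ⬝ y' ⬝ c := by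
    rw [← hop.conj_conj (hA c hc a ha), ← hz, hz', hop.conj_conj (hA c hc a' ha')]
  ext t
  exact exists_congr fun c ↦ and_congr_right fun hc ↦ by rw [conj_eq c hc]

end Regular

variable [Std.Associative op] [Std.IdempotentOp op] {x y z : S}

namespace DLE

theorem of_op_left (h : DLE op x (y ⬝ z)) : DLE op x y := by
  unfold DLE at h ⊢
  calc
    x ⬝ y ⬝ x = x ⬝ y ⬝ (x ⬝ (y ⬝ z) ⬝ x) := by rw [h]
    _ = (x ⬝ y) ⬝ (x ⬝ y) ⬝ (z ⬝ x) := by ac_rfl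
    _ = x ⬝ (y ⬝ z) ⬝ x := by rw [Std.IdempotentOp.idempotent (op := op)]; ac_rfl
    _ = x := h

theorem of_op_right (h : DLE op x (y ⬝ z)) : DLE op x z := by
  unfold DLE at h ⊢
  calc
    x ⬝ z ⬝ x = x ⬝ (y ⬝ z) ⬝ x ⬝ z ⬝ x := by rw [h]
    _ = (x ⬝ y) ⬝ ((z ⬝ x) ⬝ (z ⬝ x)) := by ac_rfl
    _ = x ⬝ (y ⬝ z) ⬝ x := by rw [Std.IdempotentOp.idempotent (op := op)]; ac_rfl
    _ = x := h

theorem op_of_dle (hxy : DLE op x y) (hyz : DLE op y z) : DLE op x (y ⬝ z) := by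
  have hxyzy : DLE op x (y ⬝ z ⬝ y) := by rwa [hyz]
  exact hxyzy.of_op_left

protected theorem trans (hxy : DLE op x y) (hyz : DLE op y z) : DLE op x z :=
  (hxy.op_of_dle hyz).of_op_right

theorem op_op_eq_op (hxy : DLE op x y) (hyz : DLE op y z) (hzx : DLE op z x) :
    x ⬝ y ⬝ z = x ⬝ z := by
  calc
    x ⬝ y ⬝ z = x ⬝ y ⬝ (z ⬝ x ⬝ z) := by rw [hzx]
    _ = x ⬝ (y ⬝ z) ⬝ x ⬝ z := by ac_rfl
    _ = x ⬝ z := by rw [hxy.op_of_dle hyz]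

end DLE

theorem isRegularOp_of_exists_greenD_above
    (above : ∀ y x, DLE op y x → ∃ m, GreenD op m x ∧ y ⬝ m = y ∧ m ⬝ y = y) :
    IsRegularOp op := by
  intro x y z
  obtain ⟨n, hnx, hn, -⟩ := above (x ⬝ y) x (DLE.refl (x ⬝ y)).of_op_left
  obtain ⟨m, hmx, -, hm⟩ := above (z ⬝ x) x (DLE.refl (z ⬝ x)).of_op_right
  have hnxm : n ⬝ x ⬝ m = n ⬝ m := hnx.1.op_op_eq_op hmx.2 (hmx.1.trans hnx.2)
  calc
    x ⬝ y ⬝ x ⬝ z ⬝ x = (x ⬝ y) ⬝ x ⬝ (z ⬝ x) := by ac_rfl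
    _ = (x ⬝ y ⬝ n) ⬝ x ⬝ (m ⬝ (z ⬝ x)) := by rw [hn, hm]
    _ = (x ⬝ y) ⬝ (n ⬝ x ⬝ m) ⬝ (z ⬝ x) := by ac_rfl
    _ = (x ⬝ y ⬝ n) ⬝ (m ⬝ (z ⬝ x)) := by rw [hnxm]; ac_rfl
    _ = x ⬝ y ⬝ z ⬝ x := by rw [hn, hm]; ac_rfl

end Band

/-- A skew lattice, given by its two operations. -/
structure IsSkewLattice {S : Type*} (meet join : S → S → S) : Prop where
  meet_idem : Std.IdempotentOp meet
  join_idem : Std.IdempotentOp join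
  meet_assoc : Std.Associative meet
  join_assoc : Std.Associative join
  meet_join_self : ∀ x y, meet x (join x y) = x
  meet_join_self_right : ∀ x y, meet (join y x) x = x
  join_meet_self : ∀ x y, join x (meet x y) = x
  join_meet_self_right : ∀ x y, join (meet y x) x = x

namespace IsSkewLattice

variable {S : Type*} {meet join : S → S → S} {x y a : S}

local infixl:70 " ⋏ " => meet
local infixl:70 " ⋎ " => join

theorem dual (h : IsSkewLattice meet join) : IsSkewLattice join meet where
  meet_idem := h.join_idem
  join_idem := h.meet_idem
  meet_assoc := h.join_assoc
  join_assoc := h.meet_assoc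
  meet_join_self := h.join_meet_self
  meet_join_self_right := h.join_meet_self_right
  join_meet_self := h.meet_join_self
  join_meet_self_right := h.meet_join_self_right

theorem dle_join_of_dle_meet (h : IsSkewLattice meet join) (hxy : DLE meet x y) :
    DLE join y x := by
  have := h.meet_assoc
  have := h.join_assoc
  have := h.join_idem
  have hx : x ⋎ (y ⋏ x) = y ⋏ x := by
    calc
      x ⋎ (y ⋏ x) = (x ⋏ y ⋏ x) ⋎ (y ⋏ x) := by rw [hxy]
      _ = (x ⋏ (y ⋏ x)) ⋎ (y ⋏ x) := by ac_rfl
      _ = y ⋏ x := h.join_meet_self_right (y ⋏ x) x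
  have hy : DLE join y (x ⋎ (y ⋏ x)) := by
    rw [hx, DLE, h.join_meet_self, Std.IdempotentOp.idempotent (op := join)]
  exact hy.of_op_left

theorem dle_join_iff (h : IsSkewLattice meet join) : DLE join y x ↔ DLE meet x y :=
  ⟨h.dual.dle_join_of_dle_meet, h.dle_join_of_dle_meet⟩

theorem greenD_join_join (h : IsSkewLattice meet join) (hya : DLE meet y a) :
    GreenD meet (y ⋎ a ⋎ y) a := by
  have := h.join_assoc
  have := h.join_idem
  have haya : a ⋎ y ⋎ a = a := h.dle_join_iff.2 hya
  refine ⟨h.dle_join_iff.1 ?_, h.dle_join_iff.1 (DLE.refl (y ⋎ a ⋎ y)).of_op_left.of_op_right⟩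
  calc
    a ⋎ (y ⋎ a ⋎ y) ⋎ a = (a ⋎ y ⋎ a) ⋎ y ⋎ a := by ac_rfl
    _ = a := by rw [haya, haya]

theorem exists_greenD_above (h : IsSkewLattice meet join) (hya : DLE meet y a) :
    ∃ m, GreenD meet m a ∧ y ⋏ m = y ∧ m ⋏ y = y := by
  refine ⟨y ⋎ a ⋎ y, h.greenD_join_join hya, ?_, h.meet_join_self_right y (y ⋎ a)⟩
  rw [h.join_assoc.assoc]
  exact h.meet_join_self y (a ⋎ y)

theorem isRegularOp_meet (h : IsSkewLattice meet join) : IsRegularOp meet :=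
  have := h.meet_assoc
  have := h.meet_idem
  isRegularOp_of_exists_greenD_above fun _ _ ↦ h.exists_greenD_above

theorem mem_coset_self (h : IsSkewLattice meet join) (hya : DLE meet y a) :
    y ∈ coset meet (dClass meet a) y := by
  obtain ⟨m, hma, hym, hmy⟩ := h.exists_greenD_above hya
  exact ⟨m, hma, by rw [hmy, hym]⟩

end IsSkewLattice

theorem cosets_partition_general {S : Type*} {meet join : S → S → S}
    (h : IsSkewLattice meet join) (a : S) :
    (∀ y, DLE meet y a → y ∈ coset meet (dClass meet a) y) ∧
      ∀ y y', (coset meet (dClass meet a) y ∩ coset meet (dClass meet a) y').Nonempty →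
        coset meet (dClass meet a) y = coset meet (dClass meet a) y' := by
  have := h.meet_assoc
  have := h.meet_idem
  exact ⟨fun _ ↦ h.mem_coset_self, fun _ _ ↦ h.isRegularOp_meet.coset_eq_of_inter_nonempty
    fun _ hc _ hb ↦ hc.1.trans hb.2⟩

/-- The cosets of A in B partition B. -/
theorem cosets_partition {S : Type*} (wedge vee : S → S → S)
    (wedge_idem : ∀ x : S, wedge x x = x)
    (vee_idem : ∀ x : S, vee x x = x)
    (wedge_assoc : ∀ x y z : S, wedge (wedge x y) z = wedge x (wedge y z))
    (vee_assoc : ∀ x y z : S, vee (vee x y) z = vee x (vee y z))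
    (abs₁ : ∀ x y : S, wedge x (vee x y) = x)
    (abs₂ : ∀ x y : S, wedge (vee y x) x = x)
    (abs₃ : ∀ x y : S, vee x (wedge x y) = x)
    (abs₄ : ∀ x y : S, vee (wedge y x) x = x)
    (a₀ b₀ : S) (hAB : wedge (wedge b₀ a₀) b₀ = b₀)
    (A : Set S) (hA : A = {x | wedge (wedge x a₀) x = x ∧ wedge (wedge a₀ x) a₀ = a₀})
    (B : Set S) (hB : B = {x | wedge (wedge x b₀) x = x ∧ wedge (wedge b₀ x) b₀ = b₀}) :
    (∀ y ∈ B, y ∈ {z | ∃ a ∈ A, z = wedge (wedge a y) a}) ∧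
      (∀ y ∈ B, ∀ y' ∈ B,
        ({z | ∃ a ∈ A, z = wedge (wedge a y) a} ∩
            {z | ∃ a ∈ A, z = wedge (wedge a y') a}).Nonempty →
          {z | ∃ a ∈ A, z = wedge (wedge a y) a} =
            {z | ∃ a ∈ A, z = wedge (wedge a y') a}) := by
  subst hA hB
  have h : IsSkewLattice wedge vee :=
    ⟨⟨wedge_idem⟩, ⟨vee_idem⟩, ⟨wedge_assoc⟩, ⟨vee_assoc⟩, abs₁, abs₂, abs₃, abs₄⟩
  have ⟨mem_self, eq_of_inter⟩ := cosets_partition_general h a₀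
  have : Std.Associative wedge := ⟨wedge_assoc⟩
  have : Std.IdempotentOp wedge := ⟨wedge_idem⟩
  exact ⟨fun y hy ↦ mem_self y (DLE.trans hy.1 hAB), fun y _ y' _ ↦ eq_of_inter y y'⟩
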